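/- arXiv:0708.2138 — 2 statements merged into one kernel-verified Lean document; each statement's English description precedes it below -/
import Mathlib

section
/- Let 2 ≤ r ≤ n−2 and let w = (s_{a_1}·s_{a_1−1}⋯s_1)·(s_{a_2}·s_{a_2−1}⋯s_2)⋯(s_{a_r}·s_{a_r−1}⋯s_r) ∈ W^{I_r}, where 1 ≤ a_1 < a_2 < ⋯ < a_r ≤ n−1 and ℓ(w) = Σ_{i=1}^r (a_i − i + 1). Then the inversion set R^+(w^{−1}) = {β : β a positive root with w^{−1}(β) < 0} is exactly {α_j + α_{j+1} + ⋯ + α_{a_i} = e_j − e_{a_i+1} : 1 ≤ i ≤ r, 1 ≤ j ≤ a_i, and j ≠ a_k + 1 for every k < i}. -/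
/-!  Setting: `W = S_N`, the symmetric group of `{1, …, N}`, acting on `ℝ^N` by
permuting coordinates (`w · e_i = e_{w(i)}`).  Vectors, roots and indices are written
1-based: `stdE N j` is the standard basis vector `e_j` (for `1 ≤ j ≤ N`),
`sroot N i = α_i = e_i − e_{i+1}` is the `i`-th simple root (for `1 ≤ i ≤ N−1`), and
`sTrans N i = s_i` is the adjacent transposition `(i, i+1)`. -/

namespace SnPaper

/-- The standard basis vector `e_j` of `ℝ^N` (1-based; junk value `0` out of range). -/
noncomputable def stdE (N j : ℕ) : Fin N → ℝ :=
  if h : 1 ≤ j ∧ j ≤ N then Pi.single (⟨j - 1, by omega⟩ : Fin N) 1 else 0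

/-- The simple root `α_i = e_i − e_{i+1}`. -/
noncomputable def sroot (N i : ℕ) : Fin N → ℝ := stdE N i - stdE N (i + 1)

/-- The adjacent transposition `s_i = (i, i+1)` (1-based; junk value `1` out of range). -/
def sTrans (N i : ℕ) : Equiv.Perm (Fin N) :=
  if h : 1 ≤ i ∧ i + 1 ≤ N then
    Equiv.swap (⟨i - 1, by omega⟩ : Fin N) (⟨i, by omega⟩ : Fin N)
  else 1

/-- The action of `w ∈ S_N` on `ℝ^N` permuting coordinates: `w · e_i = e_{w(i)}`. -/
def permAct (N : ℕ) (w : Equiv.Perm (Fin N)) (v : Fin N → ℝ) : Fin N → ℝ := v ∘ w.symm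

/-- `v` is a combination of the simple roots `α_1, …, α_{N−1}` with all
coefficients `≥ 0`. -/
def IsNonnegComb (N : ℕ) (v : Fin N → ℝ) : Prop :=
  ∃ c : ℕ → ℝ, (∀ i, 0 ≤ c i) ∧ v = ∑ i ∈ Finset.Icc 1 (N - 1), c i • sroot N i

/-- `v > 0`: a nonzero nonnegative combination of the simple roots. -/
def IsPos (N : ℕ) (v : Fin N → ℝ) : Prop := IsNonnegComb N v ∧ v ≠ 0

/-- `x ≤ y` for vectors: `y − x` is a nonnegative combination of the simple roots. -/
def vle (N : ℕ) (x y : Fin N → ℝ) : Prop := IsNonnegComb N (y - x)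

/-- The Coxeter length `ℓ(w)`: the least `k` such that `w` is a product of `k` adjacent
transpositions `s_i`, `1 ≤ i ≤ N−1`. -/
noncomputable def len (N : ℕ) (w : Equiv.Perm (Fin N)) : ℕ :=
  sInf {k | ∃ L : List ℕ, (∀ i ∈ L, 1 ≤ i ∧ i ≤ N - 1) ∧ L.length = k ∧
    (L.map (sTrans N)).prod = w}

/-- `w ≤ τ` in `W`:  `ℓ(τ) = ℓ(w) + ℓ(τ w⁻¹)`. -/
def wle (N : ℕ) (w τ : Equiv.Perm (Fin N)) : Prop :=
  len N τ = len N w + len N (τ * w⁻¹)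

/-- `W^{I_r} = {w ∈ W : w(α_j) > 0 for all j ≠ r}`. -/
def WIr (N r : ℕ) : Set (Equiv.Perm (Fin N)) :=
  {w | ∀ j, 1 ≤ j → j ≤ N - 1 → j ≠ r → IsPos N (permAct N w (sroot N j))}

/-- The block `s_a · s_{a−1} ⋯ s_j` of consecutive simple reflections. -/
def block (N j a : ℕ) : Equiv.Perm (Fin N) :=
  ((List.range' j (a + 1 - j)).reverse.map (sTrans N)).prod

/-- The canonical form `(s_{a_i} ⋯ s_i) · (s_{a_{i+1}} ⋯ s_{i+1}) ⋯ (s_{a_r} ⋯ s_r)`. -/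
def canonForm (N i r : ℕ) (a : ℕ → ℕ) : Equiv.Perm (Fin N) :=
  ((List.range' i (r + 1 - i)).map fun j => block N j (a j)).prod

/-- The fundamental weight `ω_r = e_1 + ⋯ + e_r − (r/N)(e_1 + ⋯ + e_N)`. -/
noncomputable def fundWeight (N r : ℕ) : Fin N → ℝ :=
  (∑ i ∈ Finset.Icc 1 r, stdE N i) - ((r : ℝ) / (N : ℝ)) • ∑ i ∈ Finset.Icc 1 N, stdE N i

end SnPaper

namespace SnPaper

lemma stdE_eq (n p : ℕ) (h1 : 1 ≤ p) (h2 : p ≤ n) :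
    stdE n p = Pi.single (⟨p - 1, by omega⟩ : Fin n) 1 := by
  unfold stdE
  rw [dif_pos ⟨h1, h2⟩]

lemma stdE_fin (n : ℕ) (x : Fin n) : stdE n (x.val + 1) = Pi.single x 1 := by
  rw [stdE_eq n _ (by omega) (by omega)]
  rfl

lemma pair_sroot (n i : ℕ) (h1 : 1 ≤ i) (h2 : i ≤ n - 1) :
    ∑ x : Fin n, (x.val : ℝ) * sroot n i x = -1 := by
  unfold sroot
  rw [stdE_eq n i h1 (by omega), stdE_eq n (i + 1) (by omega) (by omega)]
  simp only [Pi.sub_apply, mul_sub, Finset.sum_sub_distrib, Pi.single_apply, mul_ite, mul_one,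
    mul_zero, Finset.sum_ite_eq', Finset.sum_ite_eq, Finset.mem_univ, if_true]
  obtain ⟨k, rfl⟩ : ∃ k, i = k + 1 := ⟨i - 1, by omega⟩
  simp

lemma isPos_iff (n : ℕ) (x y : Fin n) :
    IsPos n (Pi.single x 1 - Pi.single y 1) ↔ x < y := by
  constructor
  · rintro ⟨⟨c, hc, hv⟩, hne⟩
    have hxy : x ≠ y := by
      rintro rfl
      exact hne (sub_self _)
    have h1 : ∑ z : Fin n, (z.val : ℝ) * (Pi.single x 1 - Pi.single y 1 : Fin n → ℝ) z
        = (x.val : ℝ) - y.val := by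
      simp [mul_sub, Finset.sum_sub_distrib, Pi.single_apply]
    rw [hv] at h1
    have h2 : ∑ z : Fin n, (z.val : ℝ) * (∑ i ∈ Finset.Icc 1 (n - 1), c i • sroot n i) z
        = ∑ i ∈ Finset.Icc 1 (n - 1), c i * (-1) := by
      simp only [Finset.sum_apply, Pi.smul_apply, smul_eq_mul, Finset.mul_sum]
      rw [Finset.sum_comm]
      refine Finset.sum_congr rfl fun i hi => ?_
      rw [Finset.mem_Icc] at hi
      rw [← pair_sroot n i hi.1 hi.2, Finset.mul_sum]
      refine Finset.sum_congr rfl fun z _ => ?_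
      ring
    have h3 : ∑ i ∈ Finset.Icc 1 (n - 1), c i * (-1) ≤ 0 :=
      Finset.sum_nonpos fun i _ => by linarith [hc i]
    have h4 : (x.val : ℝ) ≤ y.val := by linarith
    exact lt_of_le_of_ne (by exact_mod_cast h4) hxy
  · intro hlt
    have hlt' : x.val < y.val := hlt
    refine ⟨⟨fun i => if i ∈ Finset.Ico (x.val + 1) (y.val + 1) then 1 else 0, ?_, ?_⟩, ?_⟩
    · intro i
      dsimp only
      split_ifs <;> norm_num
    · simp only [ite_smul, one_smul, zero_smul]
      rw [← Finset.sum_filter]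
      have : (Finset.Icc 1 (n - 1)).filter (fun i => i ∈ Finset.Ico (x.val + 1) (y.val + 1))
          = Finset.Ico (x.val + 1) (y.val + 1) := by
        ext i
        simp only [Finset.mem_filter, Finset.mem_Icc, Finset.mem_Ico]
        omega
      rw [this]
      have key := Finset.sum_Ico_sub (fun i => stdE n i)
        (show x.val + 1 ≤ y.val + 1 by omega)
      rw [← stdE_fin n x, ← stdE_fin n y]
      rw [← neg_sub (stdE n (y.val + 1)), ← key, ← Finset.sum_neg_distrib]
      refine Finset.sum_congr rfl fun i _ => ?_
      unfold sroot
      rw [neg_sub]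
    · intro h
      have := congrFun h x
      simp [hlt.ne] at this

lemma permAct_single (n : ℕ) (w : Equiv.Perm (Fin n)) (x y : Fin n) :
    permAct n w (Pi.single x 1 - Pi.single y 1) = Pi.single (w x) 1 - Pi.single (w y) 1 := by
  funext z
  simp only [permAct, Function.comp, Pi.sub_apply, Pi.single_apply, Equiv.symm_apply_eq]

lemma block_fact (n j : ℕ) (hj : 1 ≤ j) (m : ℕ) (hm : j + m ≤ n) :
    (∀ x : Fin n, (x.val + 1 < j ∨ j + m < x.val + 1) →
      ((List.range' j m).reverse.map (sTrans n)).prod x = x) ∧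
    (∀ x : Fin n, x.val + 1 = j →
      (((List.range' j m).reverse.map (sTrans n)).prod x).val = j - 1 + m) := by
  induction m with
  | zero =>
    simp
    intro x hx
    omega
  | succ m ih =>
    obtain ⟨h1, h2⟩ := ih (by omega)
    rw [List.range'_concat]
    simp only [List.reverse_append, List.reverse_cons, List.reverse_nil, List.nil_append,
      List.cons_append, List.map_cons, List.prod_cons, Equiv.Perm.mul_apply, one_mul]
    have hs : sTrans n (j + m) = Equiv.swap (⟨j + m - 1, by omega⟩ : Fin n) ⟨j + m, by omega⟩ := by
      unfold sTrans
      rw [dif_pos ⟨by omega, by omega⟩]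
    rw [hs]
    constructor
    · intro x hx
      rw [h1 x (by omega)]
      apply Equiv.swap_apply_of_ne_of_ne
      · intro h
        have := congrArg Fin.val h
        simp at this
        omega
      · intro h
        have := congrArg Fin.val h
        simp at this
        omega
    · intro x hx
      have : ((List.range' j m).reverse.map (sTrans n)).prod x = ⟨j + m - 1, by omega⟩ := by
        apply Fin.ext
        rw [h2 x hx]
        simp
        omega
      rw [this, Equiv.swap_apply_left]
      simp
      omega

lemma canon_fact (n : ℕ) (a : ℕ → ℕ) (m : ℕ)
    (hge : ∀ j, 1 ≤ j → j ≤ m → j ≤ a j) (hle : ∀ j, 1 ≤ j → j ≤ m → a j + 1 ≤ n)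
    (hinc : ∀ i j, 1 ≤ i → i < j → j ≤ m → a i < a j) :
    (∀ x : Fin n, (∀ k, 1 ≤ k → k ≤ m → a k < x.val) →
      ((List.range' 1 m).map fun j => block n j (a j)).prod x = x) ∧
    (∀ x : Fin n, x.val + 1 ≤ m →
      (((List.range' 1 m).map fun j => block n j (a j)).prod x).val = a (x.val + 1)) := by
  induction m with
  | zero => simp
  | succ m ih =>
    obtain ⟨h1, h2⟩ := ih (fun j p q => hge j p (by omega)) (fun j p q => hle j p (by omega))
      (fun i j p q s => hinc i j p q (by omega))
    have ga := hge (m + 1) (by omega) le_rfl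
    have la := hle (m + 1) (by omega) le_rfl
    obtain ⟨b1, b2⟩ := block_fact n (m + 1) (by omega) (a (m + 1) + 1 - (m + 1)) (by omega)
    change (∀ x : Fin n, _ → block n (m + 1) (a (m + 1)) x = x) at b1
    change (∀ x : Fin n, _ → (block n (m + 1) (a (m + 1)) x).val = _) at b2
    rw [List.range'_concat]
    simp only [List.map_append, List.map_cons, List.map_nil, List.prod_append, List.prod_cons,
      List.prod_nil, mul_one, one_mul, Equiv.Perm.mul_apply, add_comm 1 m]
    constructor
    · intro x hx
      have := hx (m + 1) (by omega) le_rfl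
      rw [b1 x (by omega), h1 x fun k p q => hx k p (by omega)]
    · intro x hx
      rcases Nat.lt_or_ge (x.val + 1) (m + 1) with h | h
      · rw [b1 x (by omega), h2 x (by omega)]
      · have he : x.val + 1 = m + 1 := by omega
        have hv := b2 x he
        rw [h1 _ fun k p q => ?_, hv, he]
        · omega
        · have := hinc k (m + 1) p (by omega) le_rfl
          omega

/-- Let `2 ≤ r ≤ n−2` and
`w = (s_{a_1} ⋯ s_1) · (s_{a_2} ⋯ s_2) ⋯ (s_{a_r} ⋯ s_r) ∈ W^{I_r}` with
`1 ≤ a_1 < ⋯ < a_r ≤ n−1` and `ℓ(w) = ∑ (a_i − i + 1)`.  Then the inversion set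
`R⁺(w⁻¹) = {β > 0 : w⁻¹(β) < 0}` is exactly
`{α_j + ⋯ + α_{a_i} = e_j − e_{a_i+1} : 1 ≤ i ≤ r, 1 ≤ j ≤ a_i, j ≠ a_k + 1 ∀ k < i}`. -/
theorem stmt14 (n r : ℕ) (hn : 4 ≤ n) (hr2 : 2 ≤ r) (hrn : r ≤ n - 2)
    (a : ℕ → ℕ) (ha1 : 1 ≤ a 1)
    (hainc : ∀ j, 1 ≤ j → j < r → a j < a (j + 1)) (har : a r ≤ n - 1)
    (w : Equiv.Perm (Fin n)) (hwdef : w = canonForm n 1 r a) (hwI : w ∈ WIr n r)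
    (hwlen : len n w = ∑ i ∈ Finset.Icc 1 r, (a i - i + 1)) :
    {β : Fin n → ℝ |
        (∃ p q, 1 ≤ p ∧ p < q ∧ q ≤ n ∧ β = stdE n p - stdE n q) ∧
        IsPos n (-(permAct n w⁻¹ β))} =
      {β : Fin n → ℝ | ∃ i j, 1 ≤ i ∧ i ≤ r ∧ 1 ≤ j ∧ j ≤ a i ∧
        (∀ k, 1 ≤ k → k < i → j ≠ a k + 1) ∧ β = stdE n j - stdE n (a i + 1)} := by
  have hinc : ∀ i j, 1 ≤ i → i < j → j ≤ r → a i < a j := by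
    intro i j hi hij hj
    induction j with
    | zero => omega
    | succ j ih =>
      have h := hainc j (by omega) (by omega)
      rcases Nat.lt_or_ge i j with h' | h'
      · have := ih h' (by omega)
        omega
      · have : i = j := by omega
        subst this
        exact h
  have hge : ∀ j, 1 ≤ j → j ≤ r → j ≤ a j := by
    intro j hj hjr
    induction j with
    | zero => omega
    | succ j ih =>
      rcases Nat.eq_zero_or_pos j with h | h
      · subst h
        simpa using ha1
      · have := ih h (by omega)
        have := hainc j h (by omega)
        omega
  have hle : ∀ j, 1 ≤ j → j ≤ r → a j + 1 ≤ n := by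
    intro j hj hjr
    rcases Nat.lt_or_ge j r with h | h
    · have := hinc j r hj h le_rfl
      omega
    · have : j = r := by omega
      subst this
      omega
  have hw : ∀ x : Fin n, x.val + 1 ≤ r → (w x).val = a (x.val + 1) := by
    intro x hx
    rw [hwdef]
    exact (canon_fact n a r hge hle hinc).2 x hx
  have hstep : ∀ x y : Fin n, y.val = x.val + 1 → y.val ≠ r → w x < w y := by
    intro x y hxy hyr
    have h := hwI y.val (by omega) (by omega) hyr
    rw [← isPos_iff, ← permAct_single, ← stdE_fin n x, ← stdE_fin n y, ← hxy]
    exact h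
  have hmono : ∀ d : ℕ, ∀ x y : Fin n, y.val = x.val + d + 1 → (y.val < r ∨ r ≤ x.val) →
      w x < w y := by
    intro d
    induction d with
    | zero =>
      intro x y h h'
      exact hstep x y (by omega) (by omega)
    | succ d ih =>
      intro x y h h'
      have h1 := ih x ⟨x.val + d + 1, by omega⟩ rfl (by simp; omega)
      have h2 := hstep ⟨x.val + d + 1, by omega⟩ y (by simp; omega) (by omega)
      exact h1.trans h2
  have hmono' : ∀ x y : Fin n, x < y → (y.val < r ∨ r ≤ x.val) → w x < w y := by
    intro x y h h'
    have hv : x.val < y.val := h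
    exact hmono (y.val - x.val - 1) x y (by omega) h'
  have hact : ∀ p q : ℕ, ∀ hp1 : 1 ≤ p, ∀ hp : p ≤ n, ∀ hq1 : 1 ≤ q, ∀ hq : q ≤ n,
      (IsPos n (-(permAct n w⁻¹ (stdE n p - stdE n q))) ↔
        w⁻¹ ⟨q - 1, by omega⟩ < w⁻¹ ⟨p - 1, by omega⟩) := by
    intro p q hp1 hp hq1 hq
    rw [stdE_eq n p hp1 hp, stdE_eq n q hq1 hq, permAct_single, neg_sub, isPos_iff]
  ext β
  simp only [Set.mem_setOf_eq]
  constructor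
  · rintro ⟨⟨p, q, hp, hpq, hq, rfl⟩, hpos⟩
    rw [hact p q hp (by omega) (by omega) hq] at hpos
    obtain ⟨x, hx⟩ : ∃ x, x = w⁻¹ ⟨p - 1, by omega⟩ := ⟨_, rfl⟩
    obtain ⟨y, hy⟩ : ∃ y, y = w⁻¹ ⟨q - 1, by omega⟩ := ⟨_, rfl⟩
    rw [← hx, ← hy] at hpos
    rw [Equiv.Perm.eq_inv_iff_eq] at hx hy
    have hnot : ¬ w y < w x := by
      rw [hx, hy, Fin.lt_def]
      simp
      omega
    have hcase : ¬ (x.val < r ∨ r ≤ y.val) := fun h => hnot (hmono' y x hpos h)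
    push Not at hcase
    have hwy := hw y (by omega)
    rw [hy] at hwy
    simp at hwy
    have hqe : q = a (y.val + 1) + 1 := by omega
    refine ⟨y.val + 1, p, by omega, by omega, hp, by omega, ?_, by rw [hqe]⟩
    intro k hk hky hpk
    have hwk := hw ⟨k - 1, by omega⟩ (by simp; omega)
    have hxk : w ⟨k - 1, by omega⟩ = w x := by
      rw [hx]
      apply Fin.ext
      rw [hwk]
      simp only [show k - 1 + 1 = k by omega]
      omega
    have := congrArg Fin.val (w.injective hxk)
    simp at this
    omega
  · rintro ⟨i, j, hi, hir, hj, hja, hne, rfl⟩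
    have hl := hle i hi hir
    refine ⟨⟨j, a i + 1, hj, by omega, hl, rfl⟩, ?_⟩
    rw [hact j (a i + 1) hj (by omega) (by omega) hl]
    obtain ⟨x, hx⟩ : ∃ x, x = w⁻¹ ⟨j - 1, by omega⟩ := ⟨_, rfl⟩
    obtain ⟨y, hy⟩ : ∃ y, y = w⁻¹ ⟨a i + 1 - 1, by omega⟩ := ⟨_, rfl⟩
    rw [← hx, ← hy]
    rw [Equiv.Perm.eq_inv_iff_eq] at hx hy
    have hyi : y = ⟨i - 1, by omega⟩ := by
      apply w.injective
      rw [hy]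
      apply Fin.ext
      rw [hw ⟨i - 1, by omega⟩ (by simp; omega)]
      simp only [show i - 1 + 1 = i by omega]
      omega
    rw [Fin.lt_def, hyi]
    simp only
    by_contra hcon
    have hwx := hw x (by omega)
    rw [hx] at hwx
    simp only at hwx
    rcases Nat.lt_or_ge (x.val + 1) i with h | h
    · exact hne (x.val + 1) (by omega) h (by omega)
    · have : x.val + 1 = i := by omega
      rw [this] at hwx
      omega

end SnPaper
end

section
/- Let n ≥ 4, r = 2, and τ_2 := (s_{⌈(n−1)/2⌉}·s_{⌈(n−1)/2⌉−1}⋯s_1)·(s_{n−1}·s_{n−2}⋯s_2) ∈ W^{I_2}. Then for w ∈ W^{I_2}: τ_2 ≤ w if and only if w = (s_m·s_{m−1}⋯s_1)·(s_{n−1}·s_{n−2}⋯s_2) for some integer m with ⌈(n−1)/2⌉ ≤ m ≤ n−2. -/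
namespace SnPaper

/-- `w` is the product of a word of length `k` in the simple reflections. -/
def HasWord (N : ℕ) (w : Equiv.Perm (Fin N)) (k : ℕ) : Prop :=
  ∃ L : List ℕ, (∀ i ∈ L, 1 ≤ i ∧ i ≤ N - 1) ∧ L.length = k ∧ (L.map (sTrans N)).prod = w

lemma len_le {N k : ℕ} {w : Equiv.Perm (Fin N)} (h : HasWord N w k) : len N w ≤ k :=
  Nat.sInf_le h

lemma len_word {N k : ℕ} {w : Equiv.Perm (Fin N)} (h : HasWord N w k) :
    HasWord N w (len N w) :=
  Nat.sInf_mem (s := {k | HasWord N w k}) ⟨k, h⟩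

lemma HasWord.mul {N k l : ℕ} {v w : Equiv.Perm (Fin N)} (hv : HasWord N v k)
    (hw : HasWord N w l) : HasWord N (v * w) (k + l) := by
  obtain ⟨L, h1, h2, h3⟩ := hv
  obtain ⟨M, g1, g2, g3⟩ := hw
  refine ⟨L ++ M, ?_, by simp [h2, g2], by simp [h3, g3]⟩
  intro i hi
  rcases List.mem_append.1 hi with h | h
  · exact h1 i h
  · exact g1 i h

lemma sTrans_inv (N i : ℕ) : (sTrans N i)⁻¹ = sTrans N i := by
  unfold sTrans
  split_ifs <;> simp

lemma HasWord.inv {N k : ℕ} {v : Equiv.Perm (Fin N)} (hv : HasWord N v k) :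
    HasWord N v⁻¹ k := by
  obtain ⟨L, h1, h2, h3⟩ := hv
  refine ⟨L.reverse, fun i hi => h1 i (List.mem_reverse.1 hi), by simp [h2], ?_⟩
  rw [← h3, List.prod_inv_reverse, List.map_map, List.map_reverse]
  congr 2
  apply List.map_congr_left
  intro i _
  simp [sTrans_inv]

lemma sTrans_val {N i : ℕ} (h1 : 1 ≤ i) (h2 : i ≤ N - 1) (x : Fin N) :
    ((sTrans N i x : Fin N) : ℕ) =
      if (x : ℕ) = i - 1 then i else if (x : ℕ) = i then i - 1 else x := by
  have hx := x.2
  unfold sTrans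
  rw [dif_pos ⟨h1, by omega⟩, Equiv.swap_apply_def]
  simp only [Fin.ext_iff]
  split_ifs <;> simp

lemma list_bound {N : ℕ} (L : List ℕ) (h : ∀ i ∈ L, 1 ≤ i ∧ i ≤ N - 1) (x y : Fin N)
    (hxy : x ≠ y) :
    (((L.map (sTrans N)).prod x : Fin N) : ℕ) ≤ x + L.length ∧
    (((L.map (sTrans N)).prod x : Fin N) : ℕ) + (((L.map (sTrans N)).prod y : Fin N) : ℕ)
      ≤ x + y + L.length := by
  induction L with
  | nil => simp
  | cons i L ih =>
    obtain ⟨ih1, ih2⟩ := ih (fun j hj => h j (List.mem_cons_of_mem _ hj))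
    obtain ⟨hi1, hi2⟩ := h i List.mem_cons_self
    have hne : (L.map (sTrans N)).prod x ≠ (L.map (sTrans N)).prod y :=
      fun e => hxy ((L.map (sTrans N)).prod.injective e)
    rw [Ne, Fin.ext_iff] at hne
    simp only [List.map_cons, List.prod_cons, Equiv.Perm.mul_apply, List.length_cons,
      sTrans_val hi1 hi2]
    split_ifs <;> omega

lemma HasWord.bound {N k : ℕ} {w : Equiv.Perm (Fin N)} (h : HasWord N w k) (x y : Fin N)
    (hxy : x ≠ y) :
    ((w x : Fin N) : ℕ) ≤ x + k ∧ ((w x : Fin N) : ℕ) + ((w y : Fin N) : ℕ) ≤ x + y + k := by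
  obtain ⟨L, h1, rfl, rfl⟩ := h
  exact list_bound L h1 x y hxy

lemma block_word {N j a : ℕ} (hj : 1 ≤ j) (ha : a ≤ N - 1) :
    HasWord N (block N j a) (a + 1 - j) := by
  refine ⟨(List.range' j (a + 1 - j)).reverse, ?_, by simp, rfl⟩
  intro i hi
  rw [List.mem_reverse, List.mem_range'_1] at hi
  omega

lemma block_succ {N j a : ℕ} (hj : j ≤ a + 1) :
    block N j (a + 1) = sTrans N (a + 1) * block N j a := by
  unfold block
  rw [show a + 1 + 1 - j = (a + 1 - j) + 1 by omega, List.range'_concat]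
  simp
  rw [show j + (a + 1 - j) = a + 1 by omega]

lemma block_empty {N a : ℕ} : block N (a + 1) a = 1 := by simp [block]

lemma block_split {N c a : ℕ} (hc : c ≤ a) :
    block N 1 a = block N (c + 1) a * block N 1 c := by
  induction a, hc using Nat.le_induction with
  | base => simp [block_empty]
  | succ a hc ih =>
    rw [block_succ (by omega), block_succ (by omega), ih, mul_assoc]

lemma block_val {N j a : ℕ} (hj : 1 ≤ j) (hja : j ≤ a + 1) (ha : a + 1 ≤ N) (x : Fin N) :
    ((block N j a x : Fin N) : ℕ) =
      if (x : ℕ) = j - 1 then a else if j ≤ (x : ℕ) ∧ (x : ℕ) ≤ a then (x : ℕ) - 1 else x := by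
  obtain ⟨j, rfl⟩ : ∃ k, j = k + 1 := ⟨j - 1, by omega⟩
  have hja' : j ≤ a := by omega
  induction a, hja' using Nat.le_induction with
  | base =>
    rw [block_empty]
    simp only [Equiv.Perm.one_apply]
    split_ifs <;> omega
  | succ a hc ih =>
    rw [block_succ (by omega), Equiv.Perm.mul_apply, sTrans_val (by omega) (by omega),
      ih (by omega) (by omega)]
    split_ifs <;> omega

/-- Values of the canonical element. -/
lemma tau_val {n a b : ℕ} (hab : a < b) (hb : b < n) (x : Fin n) :
    (((block n 1 a * block n 2 b) x : Fin n) : ℕ) =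
      if (x : ℕ) = 0 then a else if (x : ℕ) = 1 then b else
      if (x : ℕ) ≤ a + 1 then x - 2 else if (x : ℕ) ≤ b then x - 1 else x := by
  rw [Equiv.Perm.mul_apply, block_val (by omega) (by omega) (by omega),
    block_val (by omega) (by omega) (by omega)]
  split_ifs <;> omega

lemma tau_word {n a b : ℕ} (hab : a < b) (hb : b < n) :
    HasWord n (block n 1 a * block n 2 b) (a + b - 1) := by
  have := (block_word (N := n) (j := 1) (a := a) le_rfl (by omega)).mul
    (block_word (N := n) (j := 2) (a := b) (by omega) (by omega))
  rwa [show a + 1 - 1 + (b + 1 - 2) = a + b - 1 by omega] at this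

lemma tau_len {n a b : ℕ} (hab : a < b) (hb : b < n) :
    len n (block n 1 a * block n 2 b) = a + b - 1 := by
  apply le_antisymm (len_le (tau_word hab hb))
  have h := ((len_word (tau_word hab hb)).bound ⟨0, by omega⟩ ⟨1, by omega⟩ (by simp)).2
  rw [tau_val hab hb, tau_val hab hb] at h
  simp at h
  omega

lemma stdE_fun {N : ℕ} (j : ℕ) (h1 : 1 ≤ j) (h2 : j ≤ N) :
    ∑ k : Fin N, (k : ℝ) * stdE N j k = (j : ℝ) - 1 := by
  unfold stdE
  rw [dif_pos ⟨h1, h2⟩]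
  simp [Pi.single_apply, Nat.cast_sub h1]

lemma WIr_lt {N r : ℕ} {w : Equiv.Perm (Fin N)} (hw : w ∈ WIr N r) (j : ℕ) (h1 : 1 ≤ j)
    (h2 : j < N) (hr : j ≠ r) : w ⟨j - 1, by omega⟩ < w ⟨j, h2⟩ := by
  obtain ⟨⟨c, hc, hv⟩, -⟩ := hw j h1 (by omega) hr
  have key : ∑ k : Fin N, (k : ℝ) * permAct N w (sroot N j) k
      = ∑ i ∈ Finset.Icc 1 (N - 1), -c i := by
    rw [hv]
    simp only [Finset.sum_apply, Pi.smul_apply, smul_eq_mul, Finset.mul_sum]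
    rw [Finset.sum_comm]
    apply Finset.sum_congr rfl
    intro i hi
    rw [Finset.mem_Icc] at hi
    have e1 := stdE_fun (N := N) i (by omega) (by omega)
    have e2 := stdE_fun (N := N) (i + 1) (by omega) (by omega)
    calc ∑ k : Fin N, (k : ℝ) * (c i * sroot N i k)
        = c i * (∑ k : Fin N, (k : ℝ) * stdE N i k - ∑ k : Fin N, (k : ℝ) * stdE N (i + 1) k) := by
          rw [← Finset.sum_sub_distrib, Finset.mul_sum]
          apply Finset.sum_congr rfl
          intro k _
          simp only [sroot, Pi.sub_apply]
          ring
      _ = -c i := by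
          rw [e1, e2]
          push_cast
          ring
  have key2 : ∑ k : Fin N, (k : ℝ) * permAct N w (sroot N j) k
      = ((w ⟨j - 1, by omega⟩ : Fin N) : ℝ) - ((w ⟨j, h2⟩ : Fin N) : ℝ) := by
    rw [← Equiv.sum_comp w]
    simp only [permAct, Function.comp, Equiv.symm_apply_apply, sroot, Pi.sub_apply, stdE]
    rw [dif_pos ⟨h1, by omega⟩, dif_pos ⟨by omega, by omega⟩]
    simp [Pi.single_apply, mul_sub, Finset.sum_sub_distrib]
  have hle : ∑ i ∈ Finset.Icc 1 (N - 1), -c i ≤ 0 :=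
    Finset.sum_nonpos fun i _ => by linarith [hc i]
  rw [← key, key2] at hle
  have hle' : ((w ⟨j - 1, by omega⟩ : Fin N) : ℕ) ≤ ((w ⟨j, h2⟩ : Fin N) : ℕ) := by
    have : ((w ⟨j - 1, by omega⟩ : Fin N) : ℝ) ≤ ((w ⟨j, h2⟩ : Fin N) : ℝ) := by linarith
    exact_mod_cast this
  refine lt_of_le_of_ne hle' fun e => ?_
  have := w.injective e
  simp at this
  omega

/-- Permutations increasing on the indices `≥ 2` are determined by their first two values. -/
lemma perm_unique {m : ℕ} (v w : Equiv.Perm (Fin (m + 2))) (h0 : v 0 = w 0) (h1 : v 1 = w 1)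
    (hv : StrictMono fun i : Fin m => v i.succ.succ)
    (hw : StrictMono fun i : Fin m => w i.succ.succ) : v = w := by
  have hr : ∀ u : Equiv.Perm (Fin (m + 2)),
      Set.range (fun i : Fin m => u i.succ.succ) = {y | y ≠ u 0 ∧ y ≠ u 1} := by
    intro u
    ext y
    obtain ⟨x, rfl⟩ := u.surjective y
    simp only [Set.mem_range, Set.mem_ofPred_eq, Ne, EmbeddingLike.apply_eq_iff_eq]
    constructor
    · rintro ⟨i, rfl⟩
      simp [Fin.ext_iff]
    · rintro ⟨a, b⟩
      rw [Fin.ext_iff] at a b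
      simp only [Fin.val_zero, Fin.val_one] at a b
      have hx := x.2
      refine ⟨⟨x - 2, by omega⟩, ?_⟩
      simp only [Fin.ext_iff, Fin.val_succ]
      omega
  have hvw := (hv.range_inj hw).1 (by rw [hr, hr, h0, h1])
  ext x
  congr 1
  refine Fin.cases h0 (fun x => ?_) x
  cases m with
  | zero =>
    have : x = 0 := by omega
    subst this
    exact h1
  | succ m => exact Fin.cases h1 (fun x => congrFun hvw x) x

lemma nat_aux {a b x y : ℕ} (hab : a < b) (hx : 2 ≤ x) (hxy : x < y) :
    (if x = 0 then a else if x = 1 then b else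
      if x ≤ a + 1 then x - 2 else if x ≤ b then x - 1 else x) <
    (if y = 0 then a else if y = 1 then b else
      if y ≤ a + 1 then y - 2 else if y ≤ b then y - 1 else y) := by
  rw [if_neg (show ¬ x = 0 by omega), if_neg (show ¬ x = 1 by omega),
    if_neg (show ¬ y = 0 by omega), if_neg (show ¬ y = 1 by omega)]
  split_ifs <;> omega

lemma WIr_form {n : ℕ} (hn : 4 ≤ n) {w : Equiv.Perm (Fin n)} (hw : w ∈ WIr n 2) :
    ∃ a b : ℕ, a < b ∧ b < n ∧ w = block n 1 a * block n 2 b := by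
  obtain ⟨m, rfl⟩ : ∃ m, n = m + 2 := ⟨n - 2, by omega⟩
  have h01 : w 0 < w 1 := WIr_lt hw 1 le_rfl (by omega) (by omega)
  have hab : ((w 0 : Fin (m + 2)) : ℕ) < ((w 1 : Fin (m + 2)) : ℕ) := h01
  refine ⟨w 0, w 1, hab, (w 1).2, ?_⟩
  apply perm_unique
  · apply Fin.ext
    rw [tau_val hab (w 1).2]
    simp
  · apply Fin.ext
    rw [tau_val hab (w 1).2]
    simp
  · obtain ⟨k, rfl⟩ : ∃ k, m = k + 1 := ⟨m - 1, by omega⟩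
    rw [Fin.strictMono_iff_lt_succ]
    intro i
    exact WIr_lt hw (i + 3) (by omega) (by omega) (by omega)
  · intro i j hij
    rw [Fin.lt_def] at hij ⊢
    rw [tau_val hab (w 1).2, tau_val hab (w 1).2]
    have hi : 2 ≤ (i.succ.succ : ℕ) := by simp
    have hj : (i.succ.succ : ℕ) < (j.succ.succ : ℕ) := by simpa using hij
    exact nat_aux hab hi hj

/-- Let `n ≥ 4` and
`τ_2 = (s_{⌈(n−1)/2⌉} ⋯ s_1) · (s_{n−1} ⋯ s_2) ∈ W^{I_2}`.  Then for `w ∈ W^{I_2}`: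
`τ_2 ≤ w` if and only if `w = (s_m ⋯ s_1) · (s_{n−1} ⋯ s_2)` for some
`⌈(n−1)/2⌉ ≤ m ≤ n−2`. -/
theorem stmt19 (n : ℕ) (hn : 4 ≤ n)
    (mc : ℕ) (hmc : (mc : ℤ) = ⌈((n : ℚ) - 1) / 2⌉)
    (τ2 : Equiv.Perm (Fin n)) (hτ2 : τ2 = block n 1 mc * block n 2 (n - 1))
    (hτI : τ2 ∈ WIr n 2)
    (w : Equiv.Perm (Fin n)) (hw : w ∈ WIr n 2) :
    wle n τ2 w ↔
      ∃ m : ℕ, mc ≤ m ∧ m ≤ n - 2 ∧ w = block n 1 m * block n 2 (n - 1) := by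
  have hmcn : mc + 2 ≤ n ∧ 1 ≤ mc := by
    have h4 : (4 : ℚ) ≤ n := by exact_mod_cast hn
    constructor
    · have : ⌈((n : ℚ) - 1) / 2⌉ ≤ (n : ℤ) - 2 := by
        rw [Int.ceil_le]
        push_cast
        linarith
      omega
    · have : 0 < ⌈((n : ℚ) - 1) / 2⌉ := by
        rw [Int.ceil_pos]
        linarith
      omega
  obtain ⟨hmcn, -⟩ := hmcn
  have hlt := tau_len (n := n) (a := mc) (b := n - 1) (by omega) (by omega)
  have hwt := tau_word (n := n) (a := mc) (b := n - 1) (by omega) (by omega)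
  rw [← hτ2] at hlt hwt
  unfold wle
  constructor
  · intro h
    obtain ⟨a, b, hab, hb, rfl⟩ := WIr_form hn hw
    have hu := len_word ((tau_word hab hb).mul hwt.inv)
    rw [tau_len hab hb, hlt] at h
    have hb1 := (hu.bound (τ2 ⟨0, by omega⟩) (τ2 ⟨1, by omega⟩)
      (fun e => by simpa using τ2.injective e)).1
    have e0 : ((τ2 ⟨0, by omega⟩ : Fin n) : ℕ) = mc := by
      rw [hτ2, tau_val (by omega) (by omega)]
      simp
    rw [e0, Equiv.Perm.mul_apply, show τ2⁻¹ (τ2 ⟨0, by omega⟩) = (⟨0, by omega⟩ : Fin n) by simp, tau_val hab hb] at hb1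
    simp only [if_true] at hb1
    have : b = n - 1 := by omega
    subst this
    exact ⟨a, by omega, by omega, rfl⟩
  · rintro ⟨m, h1, h2, rfl⟩
    have hu : (block n 1 m * block n 2 (n - 1)) * τ2⁻¹ = block n (mc + 1) m := by
      rw [hτ2, block_split h1]
      group
    rw [hu, hlt, tau_len (by omega) (by omega)]
    have hbw := block_word (N := n) (j := mc + 1) (a := m) (by omega) (by omega)
    have hle := len_le hbw
    have hge := ((len_word hbw).bound ⟨mc, by omega⟩ ⟨mc + 1, by omega⟩ (by simp)).1
    rw [block_val (by omega) (by omega) (by omega)] at hge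
    simp at hge
    omega

end SnPaper
end
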